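/- Under the directed noisy network model, suppose n_1/n → κ ∈ (0,1) as n → ∞. Then there exists a strictly positive variance σ_d² such that √(n_1 n_2)·[(β̂_{12} − β̂_{21}) − (β_{12} − β_{21})] converges in distribution to the Gaussian N(0, σ_d²) as n → ∞. -/

import Mathlib

/-!
STATEMENT 18: Under the directed noisy network model with n₁/n → κ ∈ (0,1),
there is a strictly positive variance σ_d² such that
√(n₁ n₂)·[(β̂₁₂ − β̂₂₁) − (β₁₂ − β₂₁)] converges in distribution to N(0, σ_d²).
Convergence in distribution is expressed via pointwise convergence of CDFs
(the Gaussian CDF being continuous).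
-/

open MeasureTheory ProbabilityTheory Filter Finset

noncomputable section

/-- Conditional mass of an adjacency configuration given labels:
independent Bernoulli edges with success probability `B (l i) (l j)`, i < j. -/
def edgeMass {n : ℕ} (B : Bool → Bool → ℝ) (l : Fin n → Bool)
    (a : Fin n → Fin n → Bool) : ℝ :=
  ∏ p ∈ Finset.univ.filter (fun p : Fin n × Fin n => p.1 < p.2),
    (if a p.1 p.2 then B (l p.1) (l p.2) else 1 - B (l p.1) (l p.2))

/-- The symmetric 2×2 connectivity matrix with within-group probabilities
`p₁₁` (group 1 = `true`), `p₂₂` (group 2 = `false`) and between-group `p₁₂`. -/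
def sbmB (p₁₁ p₂₂ p₁₂ : ℝ) : Bool → Bool → ℝ :=
  fun x y => if x then (if y then p₁₁ else p₁₂) else (if y then p₁₂ else p₂₂)

/-- The 2×2 matrix of directed recall-error rates: `βm x y` is the probability
that a node with label `x` fails to report an existing edge to a node with
label `y` (`true` = group 1, `false` = group 2). -/
def dirBeta (β₁₁ β₁₂ β₂₁ β₂₂ : ℝ) : Bool → Bool → ℝ :=
  fun x y => if x then (if y then β₁₁ else β₁₂) else (if y then β₂₁ else β₂₂)

/-- Conditional mass of the observed directed network `y` given the undirected
construct network `a` and the labels: independently over ordered pairs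
`(i, j)`, `i ≠ j`, an existing edge is reported with probability
`1 − βm (l i) (l j)`, and no edges are added. -/
def dirObsMass {n : ℕ} (βm : Bool → Bool → ℝ) (l : Fin n → Bool)
    (a y : Fin n → Fin n → Bool) : ℝ :=
  ∏ p ∈ Finset.univ.filter (fun p : Fin n × Fin n => p.1 ≠ p.2),
    (if a p.1 p.2 then
      (if y p.1 p.2 then 1 - βm (l p.1) (l p.2) else βm (l p.1) (l p.2))
     else (if y p.1 p.2 then 0 else 1))

/-- `(P, A, Y)` is a directed noisy network model: the undirected construct
network `A` is a 2-group SBM conditional on the deterministic label vector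
`l`, and `Y` is a directed observation of `A` with group-dependent directed
recall errors `βm`.  The joint law is specified by its probability mass
function. -/
structure IsDirObsSBM {Ω : Type*} [MeasurableSpace Ω] (P : Measure Ω) (n : ℕ)
    (B βm : Bool → Bool → ℝ) (l : Fin n → Bool)
    (A Y : Ω → Fin n → Fin n → Bool) : Prop where
  isProb : IsProbabilityMeasure P
  symmA : ∀ ω i j, A ω i j = A ω j i
  looplessA : ∀ ω i, A ω i i = false
  looplessY : ∀ ω i, Y ω i i = false
  law : ∀ (a y : Fin n → Fin n → Bool),
    (∀ i j, a i j = a j i) → (∀ i, a i i = false) → (∀ i, y i i = false) →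
    P {ω | A ω = a ∧ Y ω = y}
      = ENNReal.ofReal (edgeMass B l a * dirObsMass βm l a y)

/-- Number of nodes in group 1 (label `true`). -/
def n₁ {n : ℕ} (l : Fin n → Bool) : ℕ :=
  (Finset.univ.filter (fun i => l i = true)).card

/-- Number of nodes in group 2 (label `false`). -/
def n₂ {n : ℕ} (l : Fin n → Bool) : ℕ :=
  (Finset.univ.filter (fun i => l i = false)).card

/-- Number of ordered pairs (i ∈ group 1, j ∈ group 2) selected by `f`. -/
def crossCard {n : ℕ} (l : Fin n → Bool) (f : Fin n → Fin n → Bool) : ℝ :=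
  ((Finset.univ.filter (fun p : Fin n × Fin n =>
      l p.1 = true ∧ l p.2 = false ∧ f p.1 p.2 = true)).card : ℝ)

/-- `û₁₂,d`: observed density of reported ties from group 1 to group 2. -/
def u12d {n : ℕ} (l : Fin n → Bool) (y : Fin n → Fin n → Bool) : ℝ :=
  crossCard l y / ((n₁ l : ℝ) * (n₂ l : ℝ))

/-- `û₂₁,d`: observed density of reported ties from group 2 to group 1. -/
def u21d {n : ℕ} (l : Fin n → Bool) (y : Fin n → Fin n → Bool) : ℝ :=
  crossCard l (fun i j => y j i) / ((n₁ l : ℝ) * (n₂ l : ℝ))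

/-- `û₁₂,a`: asymmetry rate between the groups. -/
def u12a {n : ℕ} (l : Fin n → Bool) (y : Fin n → Fin n → Bool) : ℝ :=
  crossCard l (fun i j => y i j != y j i) / ((n₁ l : ℝ) * (n₂ l : ℝ))

/-- The estimator `β̂₁₂ = (û₂₁,d − û₁₂,d + û₁₂,a)/(2 û₂₁,d)`. -/
def betaHat12 {n : ℕ} (l : Fin n → Bool) (y : Fin n → Fin n → Bool) : ℝ :=
  (u21d l y - u12d l y + u12a l y) / (2 * u21d l y)

/-- The estimator `β̂₂₁ = (û₁₂,d − û₂₁,d + û₁₂,a)/(2 û₁₂,d)`. -/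
def betaHat21 {n : ℕ} (l : Fin n → Bool) (y : Fin n → Fin n → Bool) : ℝ :=
  (u12d l y - u21d l y + u12a l y) / (2 * u12d l y)

/-
Orient every pair of distinct nodes so that group 1 comes before group 2. The triples
`(A i j, Y i j, Y j i)` over the oriented pairs are then independent, and the `n₁ n₂` cross pairs
share one law, so `β̂₁₂ − β̂₂₁` has the distribution of a fixed rational function of the mean of
`n₁ n₂` i.i.d. vectors. The delta method gives the Gaussian limit. With `p = p₁₂`, `b = β₁₂` and
`c = β₂₁`, its variance is
`(b (1 − b)² + c (1 − c)² − 2 b c (1 − b) (1 − c)) / (p (1 − b) (1 − c))`, whose numerator is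
`(b (1 − b) − c (1 − c))² + b (1 − b)³ + c (1 − c)³ > 0`. As the estimator depends on the network
through these triples alone, its law for each `n` is that of the function of the first `n₁ n₂`
terms of a single i.i.d. sequence.
-/

section LimitTheorems

variable {Ω Ω' ι : Type*} [MeasurableSpace Ω] [MeasurableSpace Ω']
  {μ : Measure Ω} {μ' : Measure Ω'}

lemma tendstoInMeasure_zero_of_norm_le_sum {κ E : Type*} [Fintype κ] [SeminormedAddCommGroup E]
    {F : Filter ι} {R : ι → Ω → E} {f : κ → ι → Ω → ℝ}
    (hf : ∀ k, TendstoInMeasure μ (f k) F (fun _ => 0))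
    (hR : ∀ i ω, ‖R i ω‖ ≤ ∑ k, ‖f k i ω‖) :
    TendstoInMeasure μ R F (fun _ => 0) := by
  simp only [tendstoInMeasure_iff_norm, sub_zero] at hf ⊢
  intro ε hε
  set δ : ℝ := ε / (Fintype.card κ + 1) with hδ
  have hδ0 : 0 < δ := by positivity
  have hsub (i : ι) : {ω | ε ≤ ‖R i ω‖} ⊆ ⋃ k, {ω | δ ≤ ‖f k i ω‖} := by
    intro ω hω
    by_contra! hsmall
    simp only [Set.mem_iUnion, Set.mem_ofPred_eq, not_exists, not_le] at hsmall hω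
    have hle : ∑ k, ‖f k i ω‖ ≤ Fintype.card κ * δ := by
      simpa using Finset.sum_le_sum fun k (_ : k ∈ Finset.univ) => (hsmall k).le
    have hεδ : (Fintype.card κ + 1) * δ = ε := by rw [hδ]; field_simp
    linarith [hR i ω]
  refine tendsto_of_tendsto_of_tendsto_of_le_of_le tendsto_const_nhds ?_ (fun _ => zero_le)
    fun i => (measure_mono (hsub i)).trans (measure_iUnion_fintype_le μ _)
  simpa using tendsto_finsetSum Finset.univ fun k _ => hf k δ hδ0

variable [IsProbabilityMeasure μ] [IsProbabilityMeasure μ']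

lemma tendstoInMeasure_of_tendstoInDistribution_const {E : Type*} [SeminormedAddCommGroup E]
    [MeasurableSpace E] [BorelSpace E] {F : Filter ι} {X : ι → Ω → E} {c : E}
    (h : TendstoInDistribution X F (fun _ => c) (fun _ => μ) μ') :
    TendstoInMeasure μ X F (fun _ => c) := by
  rw [tendstoInMeasure_iff_norm]
  intro ε hε
  have hclosed : IsClosed {x : E | ε ≤ ‖x - c‖} := isClosed_le continuous_const (by fun_prop)
  have hnull : (μ'.map fun _ => c) {x : E | ε ≤ ‖x - c‖} = 0 := by
    rw [Measure.map_apply_of_aemeasurable (by fun_prop) hclosed.measurableSet]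
    simp [hε.not_ge]
  have hlim := ProbabilityMeasure.tendsto_measure_of_null_frontier_of_tendsto' h.tendsto
    (measure_mono_null hclosed.frontier_subset hnull)
  simp only [ProbabilityMeasure.coe_mk, hnull] at hlim
  refine hlim.congr fun i => ?_
  rw [Measure.map_apply_of_aemeasurable (h.forall_aemeasurable i) hclosed.measurableSet]
  rfl

lemma tendstoInMeasure_mul_zero {F : Filter ι} [F.IsCountablyGenerated] {X R : ι → Ω → ℝ}
    {Z : Ω' → ℝ} (hX : TendstoInDistribution X F Z (fun _ => μ) μ')
    (hR : TendstoInMeasure μ R F (fun _ => 0)) (hRm : ∀ i, AEMeasurable (R i) μ) :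
    TendstoInMeasure μ (fun i ω => X i ω * R i ω) F (fun _ => 0) := by
  have h := hX.continuous_comp_prodMk_of_tendstoInMeasure_const
    (g := fun q : ℝ × ℝ => q.1 * q.2) (by fun_prop) hR hRm
  simp only [mul_zero] at h
  exact tendstoInMeasure_of_tendstoInDistribution_const h

lemma tendsto_measure_le_of_tendstoInDistribution_gaussianReal {Ω : ι → Type*}
    {_ : ∀ i, MeasurableSpace (Ω i)} {μ : ∀ i, Measure (Ω i)} [∀ i, IsProbabilityMeasure (μ i)]
    {F : Filter ι} {X : ∀ i, Ω i → ℝ} {m : ℝ} {v : NNReal} (hv : v ≠ 0)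
    (h : TendstoInDistribution X F id μ (gaussianReal m v)) (x : ℝ) :
    Tendsto (fun i => μ i {ω | X i ω ≤ x}) F (nhds (gaussianReal m v (Set.Iic x))) := by
  have := nullSingletonClass_gaussianReal (μ := m) hv
  have hlim := ProbabilityMeasure.tendsto_measure_of_null_frontier_of_tendsto' h.tendsto
    (E := Set.Iic x) (by simp)
  simp only [ProbabilityMeasure.coe_mk, Measure.map_id] at hlim
  refine hlim.congr fun i => ?_
  rw [Measure.map_apply_of_aemeasurable (h.forall_aemeasurable i) measurableSet_Iic]
  rfl

end LimitTheorems

section DeltaMethod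

variable {Ω E : Type*} [MeasurableSpace Ω] {μ : Measure Ω}
  [NormedAddCommGroup E] [NormedSpace ℝ E] [FiniteDimensional ℝ E] [MeasurableSpace E]
  [BorelSpace E] {X : ℕ → Ω → E}

lemma aemeasurable_mean (hident : ∀ k, IdentDistrib (X k) (X 0) μ μ) (M : ℕ) :
    AEMeasurable (fun ω => (M : ℝ)⁻¹ • ∑ k ∈ range M, X k ω) μ :=
  (Finset.aemeasurable_fun_sum _ fun k _ => (hident k).aemeasurable_fst).const_smul _

variable [IsProbabilityMeasure μ]

theorem tendstoInDistribution_sqrt_mul_clm_mean_sub (L : E →L[ℝ] ℝ) (hX : MemLp (X 0) 2 μ)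
    (hindep : iIndepFun X μ) (hident : ∀ k, IdentDistrib (X k) (X 0) μ μ) :
    TendstoInDistribution
      (fun (M : ℕ) ω => √M * L ((M : ℝ)⁻¹ • ∑ k ∈ range M, X k ω - μ[X 0])) atTop id (fun _ => μ)
      (gaussianReal 0 Var[fun ω => L (X 0 ω); μ].toNNReal) := by
  have hmean : μ[fun ω => L (X 0 ω)] = L (μ[X 0]) :=
    L.integral_comp_comm (hX.integrable one_le_two)
  have hclt := tendstoInDistribution_inv_sqrt_mul_sum_sub (X := fun k ω => L (X k ω))
    (P := μ) (Y := id) ⟨aemeasurable_id, Measure.map_id⟩ (L.comp_memLp' hX)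
    (hindep.comp (fun _ => L) fun _ => L.continuous.measurable)
    fun k => (hident k).comp L.continuous.measurable
  refine hclt.congr (fun M => ae_of_all _ fun ω => ?_) ae_eq_rfl
  rcases Nat.eq_zero_or_pos M with rfl | hM
  · simp
  have hsqrt : √(M : ℝ) * √M = M := Real.mul_self_sqrt M.cast_nonneg
  simp only [hmean, map_sub, map_smul, map_sum, smul_eq_mul]
  field_simp
  rw [pow_two, hsqrt]

theorem tendstoInMeasure_sqrt_mul_norm_mean_sub_mul {R : ℕ → Ω → ℝ} (hX : MemLp (X 0) 2 μ)
    (hindep : iIndepFun X μ) (hident : ∀ k, IdentDistrib (X k) (X 0) μ μ)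
    (hR : TendstoInMeasure μ R atTop (fun _ => 0)) (hRm : ∀ M, AEMeasurable (R M) μ) :
    TendstoInMeasure μ (fun (M : ℕ) ω =>
      √M * ‖(M : ℝ)⁻¹ • ∑ k ∈ range M, X k ω - μ[X 0]‖ * R M ω) atTop (fun _ => 0) := by
  let b := Module.finBasis ℝ E
  have hnorm (x : E) : ‖x‖ ≤ ∑ i, ‖‖b i‖ • (b.coord i).toContinuousLinearMap x‖ := by
    conv_lhs => rw [← b.sum_repr x]
    refine norm_sum_le_of_le _ fun i _ => ?_
    simp [norm_smul, mul_comm]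
  refine tendstoInMeasure_zero_of_norm_le_sum (fun i => tendstoInMeasure_mul_zero
    (tendstoInDistribution_sqrt_mul_clm_mean_sub (‖b i‖ • (b.coord i).toContinuousLinearMap)
      hX hindep hident) hR hRm) fun M ω => ?_
  simp only [norm_mul, norm_norm, smul_apply, ← Finset.sum_mul,
    ← Finset.mul_sum]
  gcongr
  exact hnorm _

theorem tendstoInMeasure_sqrt_mul_taylor_remainder {g : E → ℝ} {g' : E →L[ℝ] ℝ}
    (hg : Measurable g) (hg' : HasFDerivAt g g' (μ[X 0])) (hX : MemLp (X 0) 2 μ)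
    (hindep : iIndepFun X μ) (hident : ∀ k, IdentDistrib (X k) (X 0) μ μ) :
    TendstoInMeasure μ (fun (M : ℕ) ω =>
      √M * (g ((M : ℝ)⁻¹ • ∑ k ∈ range M, X k ω) - g (μ[X 0]) -
        g' ((M : ℝ)⁻¹ • ∑ k ∈ range M, X k ω - μ[X 0]))) atTop (fun _ => 0) := by
  set θ := μ[X 0]
  set ρ : E → ℝ := fun t => ‖t - θ‖⁻¹ * ‖g t - g θ - g' (t - θ)‖ with hρ
  have hrem (t : E) : ‖g t - g θ - g' (t - θ)‖ = ‖t - θ‖ * ρ t := by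
    rcases eq_or_ne t θ with rfl | ht
    · simp
    · rw [hρ, mul_inv_cancel_left₀ (norm_ne_zero_iff.2 (sub_ne_zero.2 ht))]
  have hρm (M : ℕ) : AEMeasurable (fun ω => ρ ((M : ℝ)⁻¹ • ∑ k ∈ range M, X k ω)) μ :=
    (by fun_prop : Measurable ρ).comp_aemeasurable (aemeasurable_mean hident M)
  have hρ0 : TendstoInMeasure μ (fun (M : ℕ) ω => ρ ((M : ℝ)⁻¹ • ∑ k ∈ range M, X k ω)) atTop
      (fun _ => 0) := by
    refine tendstoInMeasure_of_tendsto_ae (fun M => (hρm M).aestronglyMeasurable) ?_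
    filter_upwards [strong_law_ae X (hX.integrable one_le_two)
      (fun i j hij => hindep.indepFun hij) hident] with ω hω
    exact (hasFDerivAt_iff_tendsto.1 hg').comp hω
  refine tendstoInMeasure_zero_of_norm_le_sum (κ := Unit) (fun _ =>
    tendstoInMeasure_sqrt_mul_norm_mean_sub_mul hX hindep hident hρ0 hρm) fun M ω => ?_
  rw [Fintype.sum_unique, norm_mul, hrem, mul_assoc, norm_mul, Real.norm_of_nonneg (r := _ * ρ _)]
  rw [← hrem]
  exact norm_nonneg _

theorem tendstoInDistribution_delta_method {g : E → ℝ} {g' : E →L[ℝ] ℝ}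
    (hg : Measurable g) (hg' : HasFDerivAt g g' (μ[X 0])) (hX : MemLp (X 0) 2 μ)
    (hindep : iIndepFun X μ) (hident : ∀ k, IdentDistrib (X k) (X 0) μ μ) :
    TendstoInDistribution
      (fun (M : ℕ) ω => √M * (g ((M : ℝ)⁻¹ • ∑ k ∈ range M, X k ω) - g (μ[X 0]))) atTop id
      (fun _ => μ) (gaussianReal 0 Var[fun ω => g' (X 0 ω); μ].toNNReal) := by
  refine tendstoInDistribution_of_tendstoInMeasure_sub _ id
    (tendstoInDistribution_sqrt_mul_clm_mean_sub g' hX hindep hident) ?_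
    fun M => ((hg.comp_aemeasurable (aemeasurable_mean hident M)).sub_const _).const_mul _
  refine (tendstoInMeasure_sqrt_mul_taylor_remainder hg hg' hX hindep hident).congr_left
    fun M => ae_of_all _ fun ω => ?_
  simp only [Pi.sub_apply]
  ring

end DeltaMethod

lemma hasFDerivAt_div {E : Type*} [NormedAddCommGroup E] [NormedSpace ℝ E] {f h : E → ℝ}
    {f' h' : E →L[ℝ] ℝ} {x : E} (hf : HasFDerivAt f f' x) (hh : HasFDerivAt h h' x)
    (hx : h x ≠ 0) :
    HasFDerivAt (fun y => f y / h y) ((h x)⁻¹ • (f' - (f x / h x) • h')) x := by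
  simp only [div_eq_mul_inv]
  refine (hf.mul ((hasDerivAt_inv hx).comp_hasFDerivAt x hh)).congr_fderiv ?_
  ext v
  simp only [add_apply, sub_apply, smul_apply, smul_eq_mul, Function.comp_apply]
  field_simp
  ring

section Dyad

/-- The state of an oriented pair of nodes `(i, j)`: the tie `A i j`, the report `Y i j` and the
report `Y j i`, in this order. -/
abbrev Dyad := Bool × Bool × Bool

/-- Probability mass of a dyad: the tie exists with probability `p`, is never reported when it
does not exist, and otherwise goes unreported with probability `b` by the first node and `c` by
the second, independently. -/
def dyadMass (p b c : ℝ) (z : Dyad) : ℝ :=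
  (if z.1 then p else 1 - p) *
    ((if z.1 then (if z.2.1 then 1 - b else b) else (if z.2.1 then 0 else 1)) *
      (if z.1 then (if z.2.2 then 1 - c else c) else (if z.2.2 then 0 else 1)))

/-- The law on `Dyad` with mass function `dyadMass`. -/
def dyadLaw (p b c : ℝ) : Measure Dyad :=
  ∑ z, ENNReal.ofReal (dyadMass p b c z) • Measure.dirac z

/-- What a dyad contributes to the counts behind `u12d`, `u21d` and `u12a`, in this order. -/
def crossReport (z : Dyad) : ℝ × ℝ × ℝ :=
  (if z.2.1 then 1 else 0, if z.2.2 then 1 else 0, if z.2.1 != z.2.2 then 1 else 0)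

/-- Mean of `crossReport` under `dyadLaw p b c`. -/
def dyadMean (p b c : ℝ) : ℝ × ℝ × ℝ :=
  (p * (1 - b), p * (1 - c), p * ((1 - b) * c + b * (1 - c)))

/-- The estimator `β̂₁₂ − β̂₂₁` as a function of `(û₁₂,d, û₂₁,d, û₁₂,a)`. -/
def betaDiff (u : ℝ × ℝ × ℝ) : ℝ :=
  (u.2.1 - u.1 + u.2.2) / (2 * u.2.1) - (u.1 - u.2.1 + u.2.2) / (2 * u.1)

/-- Derivative of `betaDiff` at `dyadMean p b c`. -/
def betaDiffDeriv (p b c : ℝ) : ℝ × ℝ × ℝ →L[ℝ] ℝ :=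
  let s := ContinuousLinearMap.fst ℝ ℝ (ℝ × ℝ)
  let t := (ContinuousLinearMap.fst ℝ ℝ ℝ).comp (ContinuousLinearMap.snd ℝ ℝ (ℝ × ℝ))
  let a := (ContinuousLinearMap.snd ℝ ℝ ℝ).comp (ContinuousLinearMap.snd ℝ ℝ (ℝ × ℝ))
  (2 * (p * (1 - c)))⁻¹ • (t - s + a - b • (2 : ℝ) • t) -
    (2 * (p * (1 - b)))⁻¹ • (s - t + a - c • (2 : ℝ) • s)

/-- The variance of the linearised estimator at a single dyad; this is the limiting variance
`σ_d²`. -/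
def asymptoticVariance (p b c : ℝ) : ℝ :=
  (b * (1 - b) ^ 2 + c * (1 - c) ^ 2 - 2 * (b * c * ((1 - b) * (1 - c)))) /
    (p * ((1 - b) * (1 - c)))

variable {p b c : ℝ}

lemma dyadMass_nonneg (hp : p ∈ Set.Icc (0 : ℝ) 1) (hb : b ∈ Set.Icc (0 : ℝ) 1)
    (hc : c ∈ Set.Icc (0 : ℝ) 1) (z : Dyad) : 0 ≤ dyadMass p b c z := by
  obtain ⟨hp0, hp1⟩ := hp
  obtain ⟨hb0, hb1⟩ := hb
  obtain ⟨hc0, hc1⟩ := hc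
  unfold dyadMass
  refine mul_nonneg ?_ (mul_nonneg ?_ ?_) <;> split_ifs <;> linarith

lemma sum_dyadMass (p b c : ℝ) : ∑ z, dyadMass p b c z = 1 := by
  simp only [dyadMass, Fintype.sum_prod_type, Fintype.sum_bool, if_true, Bool.false_eq_true,
    if_false]
  ring

lemma dyadLaw_singleton (p b c : ℝ) (z : Dyad) :
    dyadLaw p b c {z} = ENNReal.ofReal (dyadMass p b c z) := by
  simp [dyadLaw, Set.indicator_apply]

lemma isProbabilityMeasure_dyadLaw (hp : p ∈ Set.Icc (0 : ℝ) 1) (hb : b ∈ Set.Icc (0 : ℝ) 1)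
    (hc : c ∈ Set.Icc (0 : ℝ) 1) : IsProbabilityMeasure (dyadLaw p b c) := by
  constructor
  simp only [dyadLaw, Measure.coe_finsetSum, Finset.sum_apply, Measure.smul_apply, measure_univ,
    smul_eq_mul, mul_one]
  rw [← ENNReal.ofReal_sum_of_nonneg fun z _ => dyadMass_nonneg hp hb hc z, sum_dyadMass,
    ENNReal.ofReal_one]

lemma integral_dyadLaw {E : Type*} [NormedAddCommGroup E] [NormedSpace ℝ E] [CompleteSpace E]
    (hp : p ∈ Set.Icc (0 : ℝ) 1) (hb : b ∈ Set.Icc (0 : ℝ) 1) (hc : c ∈ Set.Icc (0 : ℝ) 1)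
    (f : Dyad → E) :
    ∫ z, f z ∂dyadLaw p b c = (1 - p) • f (false, false, false) +
      (p * (b * c)) • f (true, false, false) + (p * ((1 - b) * c)) • f (true, true, false) +
      (p * (b * (1 - c))) • f (true, false, true) +
      (p * ((1 - b) * (1 - c))) • f (true, true, true) := by
  have := isProbabilityMeasure_dyadLaw hp hb hc
  rw [integral_fintype Integrable.of_finite]
  simp only [Measure.real, dyadLaw_singleton, ENNReal.toReal_ofReal (dyadMass_nonneg hp hb hc _)]
  simp only [dyadMass, Fintype.sum_prod_type, Fintype.sum_bool, if_true, Bool.false_eq_true,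
    if_false, mul_zero, mul_one, zero_smul, add_zero, zero_add]
  abel

lemma integral_crossReport_dyadLaw (hp : p ∈ Set.Icc (0 : ℝ) 1) (hb : b ∈ Set.Icc (0 : ℝ) 1)
    (hc : c ∈ Set.Icc (0 : ℝ) 1) : ∫ z, crossReport z ∂dyadLaw p b c = dyadMean p b c := by
  rw [integral_dyadLaw hp hb hc]
  ext <;> norm_num [crossReport, dyadMean] <;> ring

lemma measurable_betaDiff : Measurable betaDiff := by
  unfold betaDiff
  fun_prop

lemma betaDiff_dyadMean (hp : 0 < p) (hb : b < 1) (hc : c < 1) :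
    betaDiff (dyadMean p b c) = b - c := by
  have hb' : 1 - b ≠ 0 := (sub_pos.2 hb).ne'
  have hc' : 1 - c ≠ 0 := (sub_pos.2 hc).ne'
  simp only [betaDiff, dyadMean]
  field_simp
  ring

lemma betaDiffDeriv_apply (p b c : ℝ) (u : ℝ × ℝ × ℝ) :
    betaDiffDeriv p b c u =
      (2 * (p * (1 - c)))⁻¹ * (u.2.1 - u.1 + u.2.2 - b * (2 * u.2.1)) -
        (2 * (p * (1 - b)))⁻¹ * (u.1 - u.2.1 + u.2.2 - c * (2 * u.1)) :=
  rfl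

lemma hasFDerivAt_betaDiff (hp : 0 < p) (hb : b < 1) (hc : c < 1) :
    HasFDerivAt betaDiff (betaDiffDeriv p b c) (dyadMean p b c) := by
  have hb' : 1 - b ≠ 0 := (sub_pos.2 hb).ne'
  have hc' : 1 - c ≠ 0 := (sub_pos.2 hc).ne'
  have hs : HasFDerivAt (fun u => u.1) (.fst ℝ ℝ (ℝ × ℝ)) (dyadMean p b c) := hasFDerivAt_fst
  have htail : HasFDerivAt (fun u => u.2) (.snd ℝ ℝ (ℝ × ℝ)) (dyadMean p b c) := hasFDerivAt_snd
  have h12 := hasFDerivAt_div ((htail.fst.sub hs).add htail.snd) (htail.fst.const_mul 2)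
    (by simp only [dyadMean]; positivity)
  have h21 := hasFDerivAt_div ((hs.sub htail.fst).add htail.snd) (hs.const_mul 2)
    (by simp only [dyadMean]; positivity)
  refine (h12.sub h21).congr_fderiv ?_
  have hratio12 : (p * (1 - c) - p * (1 - b) + p * ((1 - b) * c + b * (1 - c))) /
      (2 * (p * (1 - c))) = b := by field_simp; ring
  have hratio21 : (p * (1 - b) - p * (1 - c) + p * ((1 - b) * c + b * (1 - c))) /
      (2 * (p * (1 - b))) = c := by field_simp; ring
  simp only [dyadMean, Pi.sub_apply, Pi.add_apply, hratio12, hratio21]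
  rfl

lemma asymptoticVariance_pos (hp : 0 < p) (hb : b ∈ Set.Ioo (0 : ℝ) 1)
    (hc : c ∈ Set.Ioo (0 : ℝ) 1) : 0 < asymptoticVariance p b c := by
  obtain ⟨hb0, hb1⟩ := hb
  obtain ⟨hc0, hc1⟩ := hc
  rw [← sub_pos] at hb1 hc1
  have hnum : b * (1 - b) ^ 2 + c * (1 - c) ^ 2 - 2 * (b * c * ((1 - b) * (1 - c))) =
      (b * (1 - b) - c * (1 - c)) ^ 2 + b * (1 - b) ^ 3 + c * (1 - c) ^ 3 := by ring
  rw [asymptoticVariance, hnum]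
  positivity

lemma variance_betaDiffDeriv_crossReport (hp : p ∈ Set.Ioc (0 : ℝ) 1)
    (hb : b ∈ Set.Ico (0 : ℝ) 1) (hc : c ∈ Set.Ico (0 : ℝ) 1) :
    Var[fun z => betaDiffDeriv p b c (crossReport z); dyadLaw p b c] =
      asymptoticVariance p b c := by
  have hp0 : p ≠ 0 := hp.1.ne'
  have hb' : 1 - b ≠ 0 := (sub_pos.2 hb.2).ne'
  have hc' : 1 - c ≠ 0 := (sub_pos.2 hc.2).ne'
  have hint {f : Dyad → ℝ} := integral_dyadLaw (Set.Ioc_subset_Icc_self hp)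
    (Set.Ico_subset_Icc_self hb) (Set.Ico_subset_Icc_self hc) f
  rw [variance_of_integral_eq_zero (measurable_of_finite _).aemeasurable (by
    rw [hint]
    norm_num [betaDiffDeriv_apply, crossReport]
    field_simp
    ring), hint]
  norm_num [betaDiffDeriv_apply, crossReport, asymptoticVariance]
  field_simp
  ring

theorem tendstoInDistribution_betaDiff_mean {Ω : Type*} [MeasurableSpace Ω] {μ : Measure Ω}
    [IsProbabilityMeasure μ] {D : ℕ → Ω → Dyad} (hp : p ∈ Set.Ioc (0 : ℝ) 1)
    (hb : b ∈ Set.Ico (0 : ℝ) 1) (hc : c ∈ Set.Ico (0 : ℝ) 1)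
    (hD : ∀ k, HasLaw (D k) (dyadLaw p b c) μ) (hindep : iIndepFun D μ) :
    TendstoInDistribution (fun (M : ℕ) ω =>
        √M * (betaDiff ((M : ℝ)⁻¹ • ∑ k ∈ range M, crossReport (D k ω)) - (b - c)))
      atTop id (fun _ => μ) (gaussianReal 0 (asymptoticVariance p b c).toNNReal) := by
  have hmeas : Measurable crossReport := measurable_of_finite _
  have hmean : μ[fun ω => crossReport (D 0 ω)] = dyadMean p b c := by
    rw [← integral_crossReport_dyadLaw (Set.Ioc_subset_Icc_self hp) (Set.Ico_subset_Icc_self hb)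
      (Set.Ico_subset_Icc_self hc)]
    exact (hD 0).integral_comp hmeas.aestronglyMeasurable
  have hvar : Var[fun ω => betaDiffDeriv p b c (crossReport (D 0 ω)); μ] =
      asymptoticVariance p b c := by
    rw [← variance_betaDiffDeriv_crossReport hp hb hc, ← (hD 0).map_eq,
      variance_map (measurable_of_finite _).aemeasurable (hD 0).aemeasurable]
    rfl
  have hident (k : ℕ) : IdentDistrib (fun ω => crossReport (D k ω))
      (fun ω => crossReport (D 0 ω)) μ μ :=
    ((hD k).identDistrib (hD 0)).comp hmeas
  have hL2 : MemLp (fun ω => crossReport (D 0 ω)) 2 μ :=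
    (MemLp.of_discrete (f := crossReport) (μ := μ.map (D 0))).comp_of_map (hD 0).aemeasurable
  have h := tendstoInDistribution_delta_method (X := fun k ω => crossReport (D k ω))
    measurable_betaDiff
    (hmean ▸ hasFDerivAt_betaDiff hp.1 hb.2 hc.2) hL2
    (hindep.comp (fun _ => crossReport) fun _ => hmeas) hident
  rwa [hmean, betaDiff_dyadMean hp.1 hb.2 hc.2, hvar] at h

end Dyad

section Transport

lemma measure_mem_eq_of_forall_singleton {Ω W : Type*} [MeasurableSpace Ω] [Finite W]
    [MeasurableSpace W] [MeasurableSingletonClass W] {P : Measure Ω} {m : Measure W}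
    [IsProbabilityMeasure P] [IsProbabilityMeasure m] {ξ : Ω → W}
    (h : ∀ w, P {ω | ξ ω = w} = m {w}) (S : Set W) : P {ω | ξ ω ∈ S} = m S := by
  have hle (T : Set W) : P {ω | ξ ω ∈ T} ≤ m T := by
    have hcover : {ω | ξ ω ∈ T} = ⋃ w ∈ T, {ω | ξ ω = w} := by ext; simp
    rw [hcover, ← T.toFinite.coe_toFinset]
    refine (measure_biUnion_finset_le _ _).trans ?_
    simp [h, sum_measure_singleton]
  refine (hle S).antisymm ?_
  have hcompl : m S + m Sᶜ ≤ P {ω | ξ ω ∈ S} + m Sᶜ := by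
    rw [prob_add_prob_compl S.toFinite.measurableSet, ← measure_univ (μ := P)]
    refine (measure_mono (fun ω _ => em (ξ ω ∈ S))).trans
      ((measure_union_le {ω | ξ ω ∈ S} {ω | ξ ω ∈ Sᶜ}).trans ?_)
    gcongr
    exact hle _
  exact (ENNReal.add_le_add_iff_right (measure_ne_top m _)).1 hcompl

lemma hasLaw_pi_precomp {ι κ : Type*} [Fintype ι] [Fintype κ] {Z : ι → Type*}
    [∀ i, MeasurableSpace (Z i)] (ν : ∀ i, Measure (Z i)) [∀ i, IsProbabilityMeasure (ν i)]
    {g : κ → ι} (hg : g.Injective) :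
    HasLaw (fun w k => w (g k)) (Measure.pi fun k => ν (g k)) (Measure.pi ν) :=
  ((iIndepFun_pi (X := fun i (z : Z i) => z) fun _ => aemeasurable_id).precomp hg).hasLaw_pi
    fun k => (measurePreserving_eval ν (g k)).hasLaw

end Transport

section OrientedPairs

variable {V α M : Type*} [Fintype V] [LinearOrder α] [CommMonoid M] {ρ : V → α}

lemma prod_ne_eq_prod_lt_mul_swap [DecidableEq V] (hρ : ρ.Injective) (F : V × V → M) :
    ∏ q with q.1 ≠ q.2, F q = ∏ q with ρ q.1 < ρ q.2, F q * F q.swap := by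
  have hsplit : ({q | q.1 ≠ q.2} : Finset (V × V)) =
      ({q | ρ q.1 < ρ q.2} : Finset (V × V)) ∪ ({q | ρ q.2 < ρ q.1} : Finset (V × V)) := by
    ext q
    simp [lt_or_lt_iff_ne, hρ.ne_iff]
  rw [hsplit, prod_union (disjoint_filter.2 fun q _ h => h.not_gt), prod_mul_distrib]
  congr 1
  exact prod_nbij' Prod.swap Prod.swap (by simp) (by simp) (by simp) (by simp) (by simp)

lemma prod_lt_eq_prod_lt_of_swap {β : Type*} [LinearOrder β] {σ : V → β} (hρ : ρ.Injective)
    (hσ : σ.Injective) {F : V × V → M} (hF : ∀ q, F q.swap = F q) :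
    ∏ q with ρ q.1 < ρ q.2, F q = ∏ q with σ q.1 < σ q.2, F q := by
  refine prod_nbij' (fun q => if σ q.1 < σ q.2 then q else q.swap)
    (fun q => if ρ q.1 < ρ q.2 then q else q.swap) ?_ ?_ ?_ ?_ ?_
  all_goals grind [Function.Injective]

end OrientedPairs

section Dyads

/-- The state of the pair `q` of nodes when `a` is the construct network and `y` the observed
one. -/
def dyad {V : Type*} (a y : V → V → Bool) (q : V × V) : Dyad :=
  (a q.1 q.2, y q.1 q.2, y q.2 q.1)

/-- The unordered pairs of distinct nodes, each oriented so that the rank `ρ` increases. -/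
abbrev OrientedPair {V α : Type*} [LinearOrder α] (ρ : V → α) :=
  {q : V × V // ρ q.1 < ρ q.2}

variable {V α : Type*} [LinearOrder α] {ρ : V → α}

lemma eq_of_dyad_eq (hρ : ρ.Injective) {a y a' y' : V → V → Bool}
    (ha : ∀ i j, a i j = a j i) (ha' : ∀ i j, a' i j = a' j i)
    (hal : ∀ i, a i i = false) (hal' : ∀ i, a' i i = false)
    (hyl : ∀ i, y i i = false) (hyl' : ∀ i, y' i i = false)
    (h : ∀ q : OrientedPair ρ, dyad a y q = dyad a' y' q) : a = a' ∧ y = y' := by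
  have hlt {i j : V} (hij : ρ i < ρ j) : a i j = a' i j ∧ y i j = y' i j ∧ y j i = y' j i := by
    simpa only [dyad, Prod.mk.injEq] using h ⟨(i, j), hij⟩
  have hpair (i j : V) : a i j = a' i j ∧ y i j = y' i j := by
    rcases lt_trichotomy (ρ i) (ρ j) with hij | hij | hij
    · exact ⟨(hlt hij).1, (hlt hij).2.1⟩
    · rw [hρ hij, hal, hal', hyl, hyl']
      exact ⟨rfl, rfl⟩
    · rw [ha, ha' i]
      exact ⟨(hlt hij).1, (hlt hij).2.2⟩
  exact ⟨funext₂ fun i j => (hpair i j).1, funext₂ fun i j => (hpair i j).2⟩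

lemma exists_dyad_eq (w : OrientedPair ρ → Dyad) : ∃ a y : V → V → Bool,
    (∀ i j, a i j = a j i) ∧ (∀ i, a i i = false) ∧ (∀ i, y i i = false) ∧
      ∀ q : OrientedPair ρ, dyad a y q = w q := by
  refine ⟨fun i j => if h : ρ i < ρ j then (w ⟨(i, j), h⟩).1
      else if h : ρ j < ρ i then (w ⟨(j, i), h⟩).1 else false,
    fun i j => if h : ρ i < ρ j then (w ⟨(i, j), h⟩).2.1
      else if h : ρ j < ρ i then (w ⟨(j, i), h⟩).2.2 else false,
    fun i j => ?_, by simp, by simp, fun ⟨⟨i, j⟩, hij⟩ => ?_⟩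
  · rcases lt_trichotomy (ρ i) (ρ j) with hij | hij | hij <;> simp [hij, hij.not_gt]
  · have hij' : ρ i < ρ j := hij
    simp [dyad, hij', hij'.not_gt]

end Dyads

section Network

/-- Law of the dyad of an oriented pair of nodes with labels `s` and `t`. -/
abbrev pairLaw (B βm : Bool → Bool → ℝ) (s t : Bool) : Measure Dyad :=
  dyadLaw (B s t) (βm s t) (βm t s)

variable {n : ℕ} {B βm : Bool → Bool → ℝ} {l : Fin n → Bool} {α : Type*} [LinearOrder α]
  {ρ : Fin n → α}

lemma edgeMass_mul_dirObsMass (hρ : ρ.Injective) (hB : ∀ s t, B s t = B t s)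
    (l : Fin n → Bool) {a y : Fin n → Fin n → Bool} (ha : ∀ i j, a i j = a j i) :
    edgeMass B l a * dirObsMass βm l a y = ∏ q : OrientedPair ρ,
      dyadMass (B (l q.1.1) (l q.1.2)) (βm (l q.1.1) (l q.1.2)) (βm (l q.1.2) (l q.1.1))
        (dyad a y q) := by
  have hedge : edgeMass B l a = ∏ q : Fin n × Fin n with ρ q.1 < ρ q.2,
      (if a q.1 q.2 then B (l q.1) (l q.2) else 1 - B (l q.1) (l q.2)) :=
    prod_lt_eq_prod_lt_of_swap (ρ := id) Function.injective_id hρ fun q => by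
      simp only [Prod.fst_swap, Prod.snd_swap, ha q.2 q.1, hB (l q.2) (l q.1)]
  rw [hedge, dirObsMass, prod_ne_eq_prod_lt_mul_swap hρ, ← prod_mul_distrib,
    prod_subtype _ (p := fun q : Fin n × Fin n => ρ q.1 < ρ q.2) (by simp)]
  refine prod_congr rfl fun q _ => ?_
  simp only [Prod.fst_swap, Prod.snd_swap, ha q.1.2 q.1.1, dyadMass, dyad]
  rfl

theorem IsDirObsSBM.measure_dyads_mem {Ω : Type*} [MeasurableSpace Ω] {P : Measure Ω}
    {A Y : Ω → Fin n → Fin n → Bool} (h : IsDirObsSBM P n B βm l A Y) (hρ : ρ.Injective)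
    (hBs : ∀ s t, B s t = B t s) (hB : ∀ s t, B s t ∈ Set.Icc (0 : ℝ) 1)
    (hβ : ∀ s t, βm s t ∈ Set.Icc (0 : ℝ) 1) (S : Set (OrientedPair ρ → Dyad)) :
    P {ω | (fun q : OrientedPair ρ => dyad (A ω) (Y ω) q) ∈ S} =
      Measure.pi (fun q : OrientedPair ρ => pairLaw B βm (l q.1.1) (l q.1.2)) S := by
  have := h.isProb
  have (s t : Bool) : IsProbabilityMeasure (pairLaw B βm s t) :=
    isProbabilityMeasure_dyadLaw (hB _ _) (hβ _ _) (hβ _ _)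
  refine measure_mem_eq_of_forall_singleton (fun w => ?_) S
  obtain ⟨a, y, ha, hal, hyl, hw⟩ := exists_dyad_eq w
  have hevent : {ω | (fun q : OrientedPair ρ => dyad (A ω) (Y ω) q) = w} =
      {ω | A ω = a ∧ Y ω = y} := by
    ext ω
    refine ⟨fun hω => eq_of_dyad_eq hρ (h.symmA ω) ha (h.looplessA ω) hal (h.looplessY ω) hyl
      fun q => (congrFun hω q).trans (hw q).symm, ?_⟩
    rintro ⟨hA, hY⟩
    rw [Set.mem_ofPred_eq, hA, hY]
    exact funext hw
  rw [hevent, h.law a y ha hal hyl, edgeMass_mul_dirObsMass hρ hBs l ha,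
    ENNReal.ofReal_prod_of_nonneg fun q _ => dyadMass_nonneg (hB _ _) (hβ _ _) (hβ _ _) _,
    Measure.pi_singleton]
  simp only [hw, dyadLaw_singleton]

/-- The pairs of nodes with the first in group 1 and the second in group 2. -/
abbrev CrossPair {V : Type*} (l : V → Bool) := {q : V × V // l q.1 = true ∧ l q.2 = false}

/-- A rank on the nodes that lists group 1 before group 2, so that orienting pairs by it puts a
cross pair in the order used by the estimators. -/
def groupRank {V : Type*} (l : V → Bool) (i : V) : Bool ×ₗ V := toLex (!l i, i)

lemma groupRank_injective {V : Type*} (l : V → Bool) : (groupRank l).Injective :=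
  fun _ _ h => congrArg (fun z => (ofLex z).2) h

lemma groupRank_lt_groupRank {V : Type*} [LinearOrder V] {l : V → Bool} {i j : V}
    (hi : l i = true) (hj : l j = false) : groupRank l i < groupRank l j :=
  Prod.Lex.toLex_lt_toLex.2 (.inl (by simp [hi, hj]))

theorem IsDirObsSBM.measure_crossDyads_mem {Ω : Type*} [MeasurableSpace Ω] {P : Measure Ω}
    {A Y : Ω → Fin n → Fin n → Bool} (h : IsDirObsSBM P n B βm l A Y)
    (hBs : ∀ s t, B s t = B t s) (hB : ∀ s t, B s t ∈ Set.Icc (0 : ℝ) 1)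
    (hβ : ∀ s t, βm s t ∈ Set.Icc (0 : ℝ) 1) (S : Set (CrossPair l → Dyad)) :
    P {ω | (fun q : CrossPair l => dyad (A ω) (Y ω) q) ∈ S} =
      Measure.pi (fun _ => pairLaw B βm true false) S := by
  have (s t : Bool) : IsProbabilityMeasure (pairLaw B βm s t) :=
    isProbabilityMeasure_dyadLaw (hB _ _) (hβ _ _) (hβ _ _)
  let g (q : CrossPair l) : OrientedPair (groupRank l) :=
    ⟨q, groupRank_lt_groupRank q.2.1 q.2.2⟩
  have hg : g.Injective := fun q q' hq => Subtype.ext (congrArg (fun r => r.1) hq)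
  have hlaw := hasLaw_pi_precomp (fun q : OrientedPair (groupRank l) =>
    pairLaw B βm (l q.1.1) (l q.1.2)) hg
  simp only [g, fun q : CrossPair l => q.2.1, fun q : CrossPair l => q.2.2] at hlaw
  exact (h.measure_dyads_mem (groupRank_injective l) hBs hB hβ {w | (fun q => w (g q)) ∈ S}).trans
    (hlaw.measure_eq (p := (· ∈ S)) S.toFinite.measurableSet)

lemma card_crossPair (l : Fin n → Bool) : Fintype.card (CrossPair l) = n₁ l * n₂ l := by
  rw [n₁, n₂, ← card_product, Fintype.card_subtype]
  congr 1
  ext q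
  simp

lemma crossCard_eq_sum (l : Fin n → Bool) (f : Fin n → Fin n → Bool) :
    crossCard l f = ∑ q : CrossPair l, if f q.1.1 q.1.2 then (1 : ℝ) else 0 := by
  rw [crossCard, ← sum_subtype {q : Fin n × Fin n | l q.1 = true ∧ l q.2 = false} (by simp)
    fun q => if f q.1 q.2 then (1 : ℝ) else 0, sum_boole, filter_filter]
  simp only [and_assoc]

lemma betaHat12_sub_betaHat21 (l : Fin n → Bool) (a y : Fin n → Fin n → Bool) :
    betaHat12 l y - betaHat21 l y = betaDiff
      (((n₁ l * n₂ l : ℕ) : ℝ)⁻¹ • ∑ q : CrossPair l, crossReport (dyad a y q)) := by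
  simp only [betaHat12, betaHat21, betaDiff, u12d, u21d, u12a, crossCard_eq_sum, crossReport, dyad,
    Prod.smul_fst, Prod.smul_snd, Prod.fst_sum, Prod.snd_sum, smul_eq_mul, div_eq_inv_mul,
    Nat.cast_mul]
  rfl

theorem IsDirObsSBM.measure_sqrt_mul_betaHat_sub_le {Ω Ω' : Type*} [MeasurableSpace Ω]
    [MeasurableSpace Ω'] {P : Measure Ω} {A Y : Ω → Fin n → Fin n → Bool}
    (h : IsDirObsSBM P n B βm l A Y)
    (hBs : ∀ s t, B s t = B t s) (hB : ∀ s t, B s t ∈ Set.Icc (0 : ℝ) 1)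
    (hβ : ∀ s t, βm s t ∈ Set.Icc (0 : ℝ) 1) {μ : Measure Ω'} {D : ℕ → Ω' → Dyad}
    (hD : ∀ k, HasLaw (D k) (pairLaw B βm true false) μ)
    (hindep : iIndepFun D μ) (d x : ℝ) :
    P {ω | √(n₁ l * n₂ l) * (betaHat12 l (Y ω) - betaHat21 l (Y ω) - d) ≤ x} =
      μ {ω | √(n₁ l * n₂ l : ℕ) * (betaDiff (((n₁ l * n₂ l : ℕ) : ℝ)⁻¹ •
        ∑ k ∈ range (n₁ l * n₂ l), crossReport (D k ω)) - d) ≤ x} := by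
  set M := n₁ l * n₂ l with hM
  let S : Set (CrossPair l → Dyad) :=
    {w | √M * (betaDiff ((M : ℝ)⁻¹ • ∑ q, crossReport (w q)) - d) ≤ x}
  let e : CrossPair l ≃ Fin M := Fintype.equivFinOfCardEq (card_crossPair l)
  have hpi := (hindep.precomp (Fin.val_injective.comp e.injective)).hasLaw_pi fun q => hD (e q)
  have hsum (ω : Ω') : ∑ k ∈ range M, crossReport (D k ω) = ∑ q, crossReport (D (e q) ω) := by
    rw [e.sum_comp fun k : Fin M => crossReport (D k ω),
      Fin.sum_univ_eq_sum_range fun k => crossReport (D k ω)]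
  calc P {ω | √(n₁ l * n₂ l) * (betaHat12 l (Y ω) - betaHat21 l (Y ω) - d) ≤ x}
      = P {ω | (fun q : CrossPair l => dyad (A ω) (Y ω) q) ∈ S} := by
        congr 1
        ext ω
        simp only [S, Set.mem_ofPred_eq, betaHat12_sub_betaHat21 l (A ω), hM, Nat.cast_mul]
    _ = Measure.pi (fun _ => pairLaw B βm true false) S :=
        h.measure_crossDyads_mem hBs hB hβ S
    _ = μ {ω | (fun q : CrossPair l => D (e q) ω) ∈ S} :=
        (hpi.measure_eq S.toFinite.measurableSet).symm
    _ = _ := by simp only [S, Set.mem_ofPred_eq, hsum]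

lemma n₁_add_n₂ (l : Fin n → Bool) : n₁ l + n₂ l = n := by
  simpa [n₁, n₂] using card_filter_add_card_filter_not (s := univ) fun i => l i = true

lemma tendsto_n₁_mul_n₂_atTop {κ : ℝ} (hκ0 : 0 < κ) (hκ1 : κ < 1) {l : ∀ n : ℕ, Fin n → Bool}
    (hl : Tendsto (fun n : ℕ => (n₁ (l n) : ℝ) / n) atTop (nhds κ)) :
    Tendsto (fun n => n₁ (l n) * n₂ (l n)) atTop atTop := by
  have h₁ : Tendsto (fun n => (n₁ (l n) : ℝ)) atTop atTop := by
    refine (hl.pos_mul_atTop hκ0 tendsto_natCast_atTop_atTop).congr' ?_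
    filter_upwards [eventually_ne_atTop 0] with n hn
    field_simp
  have h₂ : ∀ᶠ n in atTop, 0 < n₂ (l n) := by
    filter_upwards [hl.eventually_lt_const hκ1, eventually_gt_atTop 0] with n hlt hn
    rw [div_lt_one (by positivity), Nat.cast_lt] at hlt
    have := n₁_add_n₂ (l n)
    omega
  refine tendsto_atTop_mono' _ ?_ (tendsto_natCast_atTop_iff.1 h₁)
  filter_upwards [h₂] with n hn
  exact Nat.le_mul_of_pos_right _ hn

end Network

theorem statement_18_general {ι : Type*} {F : Filter ι} {N : ι → ℕ} {B βm : Bool → Bool → ℝ}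
    (hBs : ∀ s t, B s t = B t s) (hB : ∀ s t, B s t ∈ Set.Icc (0 : ℝ) 1)
    (hβ : ∀ s t, βm s t ∈ Set.Icc (0 : ℝ) 1) (hB₁₂ : 0 < B true false)
    (hβ₁₂ : βm true false ∈ Set.Ioo (0 : ℝ) 1) (hβ₂₁ : βm false true ∈ Set.Ioo (0 : ℝ) 1)
    {l : ∀ i, Fin (N i) → Bool} (hl : Tendsto (fun i => n₁ (l i) * n₂ (l i)) F atTop)
    {Ω : ι → Type*} [∀ i, MeasurableSpace (Ω i)] {P : ∀ i, Measure (Ω i)}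
    {A Y : ∀ i, Ω i → Fin (N i) → Fin (N i) → Bool}
    (hmodel : ∀ i, IsDirObsSBM (P i) (N i) B βm (l i) (A i) (Y i)) (x : ℝ) :
    Tendsto (fun i => (P i {ω | √(n₁ (l i) * n₂ (l i)) *
        (betaHat12 (l i) (Y i ω) - betaHat21 (l i) (Y i ω) -
          (βm true false - βm false true)) ≤ x}).toReal) F
      (nhds (gaussianReal 0 (asymptoticVariance (B true false) (βm true false)
        (βm false true)).toNNReal (Set.Iic x)).toReal) := by
  have := isProbabilityMeasure_dyadLaw (hB true false) (hβ true false) (hβ false true)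
  obtain ⟨Ω', _, μ, D, -, hD, hindep, hμ⟩ := exists_iid ℕ (pairLaw B βm true false)
  have hclt := tendstoInDistribution_betaDiff_mean ⟨hB₁₂, (hB true false).2⟩
    (Set.Ioo_subset_Ico_self hβ₁₂) (Set.Ioo_subset_Ico_self hβ₂₁) hD hindep
  have hcdf := tendsto_measure_le_of_tendstoInDistribution_gaussianReal
    (Real.toNNReal_pos.2 (asymptoticVariance_pos hB₁₂ hβ₁₂ hβ₂₁)).ne' hclt x
  refine (ENNReal.tendsto_toReal (measure_ne_top _ _)).comp ((hcdf.comp hl).congr fun i => ?_)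
  exact ((hmodel i).measure_sqrt_mul_betaHat_sub_le hBs hB hβ hD hindep _ x).symm

theorem statement_18
    (κ p₁₁ p₂₂ p₁₂ β₁₁ β₁₂ β₂₁ β₂₂ : ℝ)
    (hκ0 : 0 < κ) (hκ1 : κ < 1)
    (hp₁₁ : p₁₁ ∈ Set.Ioo (0:ℝ) 1) (hp₂₂ : p₂₂ ∈ Set.Ioo (0:ℝ) 1)
    (hp₁₂ : p₁₂ ∈ Set.Ioo (0:ℝ) 1)
    (hβ₁₁ : β₁₁ ∈ Set.Ioo (0:ℝ) 1) (hβ₁₂ : β₁₂ ∈ Set.Ioo (0:ℝ) 1)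
    (hβ₂₁ : β₂₁ ∈ Set.Ioo (0:ℝ) 1) (hβ₂₂ : β₂₂ ∈ Set.Ioo (0:ℝ) 1)
    (l : ∀ n : ℕ, Fin n → Bool)
    (hl : Tendsto (fun n : ℕ => (n₁ (l n) : ℝ) / n) atTop (nhds κ))
    (Ω : ℕ → Type) [mΩ : ∀ n, MeasurableSpace (Ω n)] (P : ∀ n, Measure (Ω n))
    (A Y : ∀ n, Ω n → Fin n → Fin n → Bool)
    (hmodel : ∀ n, IsDirObsSBM (P n) n
      (sbmB p₁₁ p₂₂ p₁₂) (dirBeta β₁₁ β₁₂ β₂₁ β₂₂) (l n) (A n) (Y n)) :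
    ∃ v : ℝ, 0 < v ∧
      ∀ x : ℝ, Tendsto (fun n =>
          (P n {ω | Real.sqrt ((n₁ (l n) : ℝ) * (n₂ (l n) : ℝ)) *
              ((betaHat12 (l n) (Y n ω) - betaHat21 (l n) (Y n ω)) -
                (β₁₂ - β₂₁)) ≤ x}).toReal)
        atTop (nhds ((gaussianReal 0 (Real.toNNReal v) (Set.Iic x)).toReal)) := by
  have hB : ∀ s t, sbmB p₁₁ p₂₂ p₁₂ s t ∈ Set.Icc (0 : ℝ) 1 := by
    rintro (_ | _) (_ | _) <;> exact Set.Ioo_subset_Icc_self ‹_›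
  have hβ : ∀ s t, dirBeta β₁₁ β₁₂ β₂₁ β₂₂ s t ∈ Set.Icc (0 : ℝ) 1 := by
    rintro (_ | _) (_ | _) <;> exact Set.Ioo_subset_Icc_self ‹_›
  exact ⟨asymptoticVariance p₁₂ β₁₂ β₂₁, asymptoticVariance_pos hp₁₂.1 hβ₁₂ hβ₂₁,
    statement_18_general (by rintro (_ | _) (_ | _) <;> rfl) hB hβ hp₁₂.1 hβ₁₂ hβ₂₁
      (tendsto_n₁_mul_n₂_atTop hκ0 hκ1 hl) hmodel⟩

end
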